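/- The quotient ℚ-algebra ℚ[u,v,w,x]/(r15, r20, r24, r30) is a finite-dimensional ℚ-vector space of dimension 240; in particular the four polynomials r15, r20, r24, r30 form a regular sequence in ℚ[u,v,w,x]. -/

import Mathlib

open MvPolynomial

noncomputable section

namespace E8CQ

/-- `u = X 0`, of degree 2. -/
def u : MvPolynomial (Fin 4) ℚ := X 0
/-- `v = X 1`, of degree 12. -/
def v : MvPolynomial (Fin 4) ℚ := X 1
/-- `w = X 2`, of degree 20. -/
def w : MvPolynomial (Fin 4) ℚ := X 2
/-- `x = X 3`, of degree 30. -/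
def x : MvPolynomial (Fin 4) ℚ := X 3

def r15 : MvPolynomial (Fin 4) ℚ := u ^ 15 - 2 * x

def r20 : MvPolynomial (Fin 4) ℚ :=
  9 * u ^ 20 + 45 * u ^ 14 * v + 12 * u ^ 10 * w + 60 * u ^ 8 * v ^ 2
    + 30 * u ^ 4 * v * w + 10 * u ^ 2 * v ^ 3 + 3 * w ^ 2

def r24 : MvPolynomial (Fin 4) ℚ :=
  11 * u ^ 24 + 60 * u ^ 18 * v + 21 * u ^ 14 * w + 105 * u ^ 12 * v ^ 2
    + 60 * u ^ 8 * v * w + 60 * u ^ 6 * v ^ 3 + 9 * u ^ 4 * w ^ 2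
    + 30 * u ^ 2 * v ^ 2 * w + 5 * v ^ 4

def r30 : MvPolynomial (Fin 4) ℚ :=
  -9 * x ^ 2 - 12 * u ^ 9 * v * x - 6 * u ^ 5 * w * x + 9 * u ^ 14 * v * w
    - 10 * u ^ 12 * v ^ 3 - 3 * u ^ 10 * w ^ 2 + 30 * u ^ 8 * v ^ 2 * w
    - 35 * u ^ 6 * v ^ 4 + 6 * u ^ 4 * v * w ^ 2 - 10 * u ^ 2 * v ^ 3 * w
    - 4 * v ^ 5 - 2 * w ^ 3

/-- The ideal of relations in the presentation `H^*(E₈/C; ℚ) ≅ ℚ[u,v,w,x]/I`. -/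
def relIdeal : Ideal (MvPolynomial (Fin 4) ℚ) :=
  Ideal.span {r15, r20, r24, r30}

end E8CQ

end

/-!
Modulo `u` the relations `r15`, `r20`, `r24` become `-2 * x`, `3 * w ^ 2`, `5 * v ^ 4`, so the
sequence `u, r15, r20, r24` is regular and its quotient has dimension `1 * 2 * 4 = 8`.
Homogeneous regular sequences of positive degree may be permuted, so `u` is regular on
`A = ℚ[u,v,w,x]/(r15, r20, r24)`. An explicit identity gives `r30 * g = u ^ 58` in `A` with `g` of
weight `28`, so `r30` is regular on `A`. The top weight of `A/(u)` is `28`, so multiplication by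
`u` is bijective on `A` from weight `28` on, and for the ideal `I` generated by the weight-`28`
part of `A` we get `r30 * I = u ^ 30 * I`. Since `length (A/fI) = length (A/I) + length (A/fA)`
for regular `f`, the quotients `A/(r30)` and `A/(u ^ 30)` have equal dimension, namely
`30 * 8 = 240`.
-/

open RingTheory.Sequence DirectSum

section Length

open scoped Pointwise

variable {k A : Type*} [CommRing k] [CommRing A] [Algebra k A]

theorem length_quotient_smul {a : A} (ha : a ∈ nonZeroDivisors A) (I : Ideal A) :
    Module.length k (A ⧸ a • I) =
      Module.length k (A ⧸ I) + Module.length k (A ⧸ Ideal.span {a}) :=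
  Module.length_eq_add_of_exact ((Ideal.mulQuot a I).restrictScalars k)
    ((Ideal.quotOfMul a I).restrictScalars k) (Ideal.mulQuot_injective I ha)
    (Ideal.quotOfMul_surjective I) (Ideal.exact_mulQuot_quotOfMul I)

theorem length_quotient_span_pow {a : A} (ha : a ∈ nonZeroDivisors A) (n : ℕ) :
    Module.length k (A ⧸ Ideal.span {a ^ n}) = n * Module.length k (A ⧸ Ideal.span {a}) := by
  induction n with
  | zero =>
    have : Subsingleton (A ⧸ Ideal.span {a ^ 0}) :=
      Ideal.Quotient.subsingleton_iff.mpr (by rw [pow_zero, Ideal.span_singleton_one])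
    simp [Module.length_eq_zero]
  | succ n ih =>
    have hmul : Ideal.span {a ^ (n + 1)} = a • Ideal.span {a ^ n} := by
      rw [pow_succ', ← smul_eq_mul, Submodule.smul_span, Set.smul_set_singleton]
    rw [hmul, length_quotient_smul ha, ih, Nat.cast_succ, add_one_mul]

theorem length_quotient_eq_of_smul_eq {a b : A} (ha : a ∈ nonZeroDivisors A)
    (hb : b ∈ nonZeroDivisors A) {I : Ideal A} (hI : Module.length k (A ⧸ I) ≠ ⊤)
    (hab : a • I = b • I) :
    Module.length k (A ⧸ Ideal.span {a}) = Module.length k (A ⧸ Ideal.span {b}) := by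
  have h : Module.length k (A ⧸ a • I) = Module.length k (A ⧸ b • I) := by rw [hab]
  rw [length_quotient_smul ha, length_quotient_smul hb] at h
  exact ENat.add_right_injective_of_ne_top hI h

theorem mem_nonZeroDivisors_of_mul_eq_pow {u f g : A} {n : ℕ} (hu : u ∈ nonZeroDivisors A)
    (h : f * g = u ^ n) : f ∈ nonZeroDivisors A :=
  (mul_mem_nonZeroDivisors.mp (h ▸ pow_mem hu n)).1

variable (V : ℕ → Submodule k A)

theorem exists_eq_pow_mul {u : A} {s : ℕ}
    (hV : ∀ n ≥ s, ∀ y ∈ V (n + 1), ∃ z ∈ V n, y = u * z) (m : ℕ) :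
    ∀ y ∈ V (m + s), ∃ z ∈ V s, y = u ^ m * z := by
  induction m with
  | zero => exact fun y hy ↦ ⟨y, by simpa using hy, by simp⟩
  | succ m ih =>
    intro y hy
    obtain ⟨z, hz, rfl⟩ := hV (m + s) (by omega) y (by convert hy using 2; omega)
    obtain ⟨t, ht, rfl⟩ := ih z hz
    exact ⟨t, ht, by ring⟩

variable [SetLike.GradedMonoid V]

theorem length_quotient_span_of_mul_eq_pow {u f g : A} {d s : ℕ} (hu : u ∈ nonZeroDivisors A)
    (hlen : Module.length k (A ⧸ Ideal.span {u}) ≠ ⊤) (huV : u ∈ V 1)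
    (hV : ∀ n ≥ s, ∀ y ∈ V (n + 1), ∃ z ∈ V n, y = u * z) (hf : f ∈ V d) (hg : g ∈ V s)
    (hfg : f * g = u ^ (d + s)) :
    Module.length k (A ⧸ Ideal.span {f}) = d * Module.length k (A ⧸ Ideal.span {u}) := by
  have hpow (n : ℕ) : u ^ n ∈ V n := by simpa using SetLike.pow_mem_graded n huV
  have hf₀ : f ∈ nonZeroDivisors A := mem_nonZeroDivisors_of_mul_eq_pow hu hfg
  have hcancel {y z : A} (h : u ^ s * y = u ^ s * z) : y = z :=
    mul_cancel_left_mem_nonZeroDivisors (pow_mem hu s) |>.mp h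
  have hle : Ideal.span {u ^ s} ≤ Ideal.span (V s : Set A) :=
    Ideal.span_mono (Set.singleton_subset_iff.mpr (hpow s))
  have hfin : Module.length k (A ⧸ Ideal.span (V s : Set A)) ≠ ⊤ := by
    refine ne_top_of_le_ne_top ?_ (Module.length_le_of_surjective
      ((Submodule.factor hle).restrictScalars k) (Submodule.factor_surjective hle))
    rw [length_quotient_span_pow hu]
    exact WithTop.mul_ne_top (ENat.natCast_ne_top s) hlen
  have hsmul : f • Ideal.span (V s : Set A) = u ^ d • Ideal.span (V s : Set A) := by
    simp only [Submodule.smul_span]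
    congr 1
    ext y
    simp only [Set.mem_smul_set, SetLike.mem_coe, smul_eq_mul]
    constructor
    · rintro ⟨t, ht, rfl⟩
      obtain ⟨z, hz, h⟩ := exists_eq_pow_mul V hV d _ (SetLike.mul_mem_graded hf ht)
      exact ⟨z, hz, h.symm⟩
    · rintro ⟨t, ht, rfl⟩
      obtain ⟨z, hz, h⟩ := exists_eq_pow_mul V hV s _ (SetLike.mul_mem_graded hg ht)
      refine ⟨z, hz, hcancel ?_⟩
      calc u ^ s * (f * z) = f * (g * t) := by rw [h]; ring
        _ = u ^ s * (u ^ d * t) := by rw [← mul_assoc, hfg]; ring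
  rw [length_quotient_eq_of_smul_eq hf₀ (pow_mem hu d) hfin hsmul, length_quotient_span_pow hu]

end Length

section Graded

variable {R σ : Type*} [CommRing R] [SetLike σ R] [AddSubgroupClass σ R] (𝒜 : ℕ → σ)
  [GradedRing 𝒜] {J : Ideal R} {a : R} {d : ℕ}

theorem exists_sub_mul_mem_of_mem_sup_span_singleton (hJ : J.IsHomogeneous 𝒜) (ha : a ∈ 𝒜 d)
    {n : ℕ} {p : R} (hp : p ∈ 𝒜 (d + n)) (hpJ : p ∈ J ⊔ Ideal.span {a}) :
    ∃ q ∈ 𝒜 n, p - a * q ∈ J := by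
  obtain ⟨j, hj, y, hy, rfl⟩ := Submodule.mem_sup.mp hpJ
  obtain ⟨c, rfl⟩ := Ideal.mem_span_singleton'.mp hy
  refine ⟨decompose 𝒜 c n, SetLike.coe_mem _, ?_⟩
  have hcomp : (decompose 𝒜 (j + c * a) (d + n) : R) = j + c * a := decompose_of_mem_same 𝒜 hp
  rw [← hcomp, mul_comm c a, decompose_add, DirectSum.add_apply, AddMemClass.coe_add,
    coe_decompose_mul_add_of_left_mem 𝒜 ha, add_sub_cancel_right]
  exact hJ _ hj

theorem eq_bot_of_le_smul_of_homogeneous (hJ : J.IsHomogeneous 𝒜) (ha : a ∈ 𝒜 d) (hd : 0 < d)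
    {K : Submodule R (R ⧸ J)} (hK : ∀ y ∈ K, ∃ z ∈ K, y = a • z) : K = ⊥ := by
  have hcomp (n : ℕ) : ∀ p : R, Ideal.Quotient.mk J p ∈ K → (decompose 𝒜 p n : R) ∈ J := by
    induction n using Nat.strong_induction_on with
    | _ n ih =>
      intro p hp
      obtain ⟨z, hz, hpz⟩ := hK _ hp
      obtain ⟨q, rfl⟩ := Ideal.Quotient.mk_surjective z
      have hpq : p - a * q ∈ J := Ideal.Quotient.eq.mp hpz
      rw [← sub_add_cancel p (a * q), decompose_add, DirectSum.add_apply, AddMemClass.coe_add]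
      refine J.add_mem (hJ n hpq) ?_
      by_cases hdn : d ≤ n
      · rw [coe_decompose_mul_of_left_mem_of_le 𝒜 ha hdn]
        exact J.mul_mem_left a (ih _ (by omega) q hz)
      · rw [coe_decompose_mul_of_left_mem_of_not_le 𝒜 ha hdn]
        exact J.zero_mem
  refine (Submodule.eq_bot_iff K).mpr fun y hy ↦ ?_
  obtain ⟨p, rfl⟩ := Ideal.Quotient.mk_surjective y
  exact Ideal.Quotient.eq_zero_iff_mem.mpr (hJ.mem_iff.mpr fun n ↦ hcomp n p hy)

theorem isHomogeneous_ofList {rs : List R} (hrs : ∀ r ∈ rs, SetLike.IsHomogeneousElem 𝒜 r) :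
    (Ideal.ofList rs).IsHomogeneous 𝒜 :=
  Ideal.homogeneous_span 𝒜 _ hrs

theorem isWeaklyRegular_of_perm_of_homogeneous {rs rs' : List R} (h : IsWeaklyRegular R rs)
    (hperm : rs.Perm rs') (hrs : ∀ r ∈ rs, ∃ d, 0 < d ∧ r ∈ 𝒜 d) : IsWeaklyRegular R rs' := by
  refine h.prototype_perm hperm fun a b ts hts hK ↦ ?_
  obtain ⟨d, hd, ha⟩ := hrs a (hts.subset List.mem_cons_self)
  have hJ : (Ideal.ofList ts • ⊤ : Ideal R).IsHomogeneous 𝒜 := by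
    rw [smul_eq_mul, Ideal.mul_top]
    refine isHomogeneous_ofList 𝒜 fun r hr ↦ ?_
    obtain ⟨e, -, he⟩ := hrs r (hts.subset (by simp [hr]))
    exact ⟨e, he⟩
  refine eq_bot_of_le_smul_of_homogeneous 𝒜 hJ ha hd fun y hy ↦ ?_
  rw [hK] at hy
  obtain ⟨z, hz, rfl⟩ := hy
  exact ⟨z, hz, rfl⟩

end Graded

section Concat

variable {R : Type*} [CommRing R]

theorem isWeaklyRegular_concat_iff {rs : List R} {r : R} :
    IsWeaklyRegular R (rs ++ [r]) ↔
      IsWeaklyRegular R rs ∧ ∀ p, r * p ∈ Ideal.ofList rs → p ∈ Ideal.ofList rs := by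
  rw [isWeaklyRegular_append_iff, isWeaklyRegular_singleton_iff,
    isSMulRegular_quotient_iff_mem_of_smul_mem]
  simp

theorem sup_span_singleton_le_of_sub_mem {I : Ideal R} {a b : R} (hab : a - b ∈ I) :
    I ⊔ Ideal.span {a} ≤ I ⊔ Ideal.span {b} := by
  refine sup_le le_sup_left ((Ideal.span_singleton_le_iff_mem _).mpr ?_)
  rw [← sub_add_cancel a b]
  exact add_mem (Ideal.mem_sup_left hab) (Ideal.mem_sup_right (Ideal.mem_span_singleton_self b))

theorem sup_span_singleton_eq_of_sub_mem {I : Ideal R} {a b : R} (hab : a - b ∈ I) :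
    I ⊔ Ideal.span {a} = I ⊔ Ideal.span {b} :=
  (sup_span_singleton_le_of_sub_mem hab).antisymm
    (sup_span_singleton_le_of_sub_mem (neg_sub a b ▸ neg_mem hab))

theorem isWeaklyRegular_concat_congr {as bs : List R} {a b c : R} (has : IsWeaklyRegular R as)
    (hbs : IsWeaklyRegular R (bs ++ [b])) (hideal : Ideal.ofList as = Ideal.ofList bs)
    (hc : IsUnit c) (hab : a - c * b ∈ Ideal.ofList bs) :
    IsWeaklyRegular R (as ++ [a]) ∧ Ideal.ofList (as ++ [a]) = Ideal.ofList (bs ++ [b]) := by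
  constructor
  · refine isWeaklyRegular_concat_iff.mpr ⟨has, fun p hp ↦ ?_⟩
    rw [hideal] at hp ⊢
    refine (isWeaklyRegular_concat_iff.mp hbs).2 p ((Ideal.unit_mul_mem_iff_mem _ hc).mp ?_)
    convert Ideal.sub_mem _ hp (Ideal.mul_mem_right p _ hab) using 1
    ring
  · rw [Ideal.ofList_append, Ideal.ofList_append, hideal, Ideal.ofList_singleton,
      Ideal.ofList_singleton, ← Ideal.span_singleton_mul_left_unit hc b,
      sup_span_singleton_eq_of_sub_mem hab]

end Concat

section Monomial

variable {σ R : Type*} [CommRing R] (n : σ → ℕ)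

theorem mem_span_X_pow_image_iff {s : Set σ} {p : MvPolynomial σ R} :
    p ∈ Ideal.span ((fun i ↦ (X i : MvPolynomial σ R) ^ n i) '' s) ↔
      ∀ m ∈ p.support, ∃ i ∈ s, n i ≤ m i := by
  have h := mem_ideal_span_monomial_image (x := p) (s := (fun i ↦ Finsupp.single i (n i)) '' s)
  simpa only [Set.image_image, Set.exists_mem_image, Finsupp.single_le_iff, ← X_pow_eq_monomial]
    using h

theorem mem_span_X_pow_of_X_pow_mul_mem {s : Set σ} {i : σ} (hi : i ∉ s) {p : MvPolynomial σ R}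
    (hp : X i ^ n i * p ∈ Ideal.span ((fun j ↦ (X j : MvPolynomial σ R) ^ n j) '' s)) :
    p ∈ Ideal.span ((fun j ↦ (X j : MvPolynomial σ R) ^ n j) '' s) := by
  rw [mem_span_X_pow_image_iff] at hp ⊢
  intro m hm
  obtain ⟨j, hj, hle⟩ := hp (Finsupp.single i (n i) + m) (by
    rwa [mem_support_iff, X_pow_eq_monomial, coeff_monomial_mul, one_mul, ← mem_support_iff])
  have hij : i ≠ j := fun h ↦ hi (h ▸ hj)
  exact ⟨j, hj, by simpa [Finsupp.single_eq_of_ne hij.symm] using hle⟩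

theorem ofList_map_eq_span_image {S : Type*} [CommRing S] (f : σ → S) (l : List σ) :
    Ideal.ofList (l.map f) = Ideal.span (f '' {i | i ∈ l}) :=
  congrArg Ideal.span (Set.ext fun _ ↦ List.mem_map)

theorem isWeaklyRegular_X_pow {l : List σ} (hl : l.Nodup) :
    IsWeaklyRegular (MvPolynomial σ R) (l.map fun i ↦ (X i : MvPolynomial σ R) ^ n i) := by
  induction l using List.reverseRecOn with
  | nil => exact .nil (MvPolynomial σ R) _
  | append_singleton l i ih =>
    rw [List.nodup_append_comm, List.singleton_append, List.nodup_cons] at hl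
    rw [List.map_append, List.map_singleton, isWeaklyRegular_concat_iff, ofList_map_eq_span_image]
    exact ⟨ih hl.2, fun _ ↦ mem_span_X_pow_of_X_pow_mul_mem n hl.1⟩

/-- The coefficients of a polynomial at the exponents `e` with `e i < n i` for all `i`. They span a
complement of the ideal generated by the `X i ^ n i`. -/
noncomputable def boxCoeff [Finite σ] : MvPolynomial σ R →ₗ[R] ((∀ i, Fin (n i)) → R) :=
  LinearMap.pi fun e ↦ lcoeff R (Finsupp.equivFunOnFinite.symm fun i ↦ (e i : ℕ))

theorem ker_boxCoeff [Finite σ] :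
    LinearMap.ker (boxCoeff n : MvPolynomial σ R →ₗ[R] _) =
      (Ideal.span (Set.range fun i ↦ (X i : MvPolynomial σ R) ^ n i)).restrictScalars R := by
  ext p
  rw [Submodule.restrictScalars_mem, ← Set.image_univ, mem_span_X_pow_image_iff, LinearMap.mem_ker]
  constructor
  · intro h m hm
    by_contra! hlt
    refine mem_support_iff.mp hm ?_
    have hcoeff := congrFun h fun i ↦ ⟨m i, hlt i (Set.mem_univ i)⟩
    simpa [boxCoeff] using hcoeff
  · intro h
    funext e
    by_contra hne
    obtain ⟨i, -, hi⟩ := h _ (mem_support_iff.mpr hne)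
    exact (e i).isLt.not_ge hi

theorem boxCoeff_surjective [Finite σ] :
    Function.Surjective (boxCoeff n : MvPolynomial σ R →ₗ[R] _) := by
  classical
  cases nonempty_fintype σ
  intro c
  have hinj : Function.Injective fun e : ∀ i, Fin (n i) ↦
      Finsupp.equivFunOnFinite.symm fun i ↦ (e i : ℕ) :=
    fun _ _ h ↦ funext fun i ↦ Fin.ext (DFunLike.congr_fun h i)
  refine ⟨∑ e, monomial (Finsupp.equivFunOnFinite.symm fun i ↦ (e i : ℕ)) (c e), ?_⟩
  funext e
  simp [boxCoeff, coeff_monomial, hinj.eq_iff]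

theorem length_quotient_span_X_pow (k : Type*) [Field k] [Fintype σ] :
    Module.length k (MvPolynomial σ k ⧸
      Ideal.span (Set.range fun i ↦ (X i : MvPolynomial σ k) ^ n i)) = ∏ i, n i := by
  classical
  let e := (Submodule.quotEquivOfEq _ _ (ker_boxCoeff n)).symm ≪≫ₗ
    (boxCoeff n : MvPolynomial σ k →ₗ[k] _).quotKerEquivOfSurjective (boxCoeff_surjective n)
  refine e.length_eq.trans ?_
  rw [Module.length_eq_finrank, Module.finrank_fintype_fun_eq_card, Fintype.card_pi]
  simp only [Fintype.card_fin]

theorem mem_span_X_pow_of_isWeightedHomogeneous [Fintype σ] {wt : σ → ℕ} {N : ℕ}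
    (hN : ∑ i, (n i - 1) * wt i < N) {p : MvPolynomial σ R} (hp : IsWeightedHomogeneous wt p N) :
    p ∈ Ideal.span (Set.range fun i ↦ (X i : MvPolynomial σ R) ^ n i) := by
  rw [← Set.image_univ, mem_span_X_pow_image_iff]
  intro m hm
  by_contra! hlt
  have hweight : ∑ i, m i * wt i = N := by
    simpa [Finsupp.weight_apply, Finsupp.sum_fintype] using hp (mem_support_iff.mp hm)
  refine hN.not_ge (hweight ▸ Finset.sum_le_sum fun i _ ↦ ?_)
  exact Nat.mul_le_mul_right _ (Nat.le_sub_one_of_lt (hlt i (Set.mem_univ i)))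

end Monomial

section QuotientGraded

variable {k R : Type*} [CommRing k] [CommRing R] [Algebra k R]

theorem mk_mem_nonZeroDivisors_iff {J : Ideal R} {a : R} :
    Ideal.Quotient.mk J a ∈ nonZeroDivisors (R ⧸ J) ↔ ∀ p, a * p ∈ J → p ∈ J := by
  simp only [mem_nonZeroDivisors_iff_left, Ideal.Quotient.mk_surjective.forall, ← map_mul,
    Ideal.Quotient.eq_zero_iff_mem]

theorem length_quotient_sup_span_singleton (J : Ideal R) (a : R) :
    Module.length k (R ⧸ J ⊔ Ideal.span {a}) =
      Module.length k ((R ⧸ J) ⧸ Ideal.span {Ideal.Quotient.mk J a}) := by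
  rw [← (DoubleQuot.quotQuotEquivQuotSupₐ k J (Ideal.span {a})).toLinearEquiv.length_eq,
    Ideal.map_span, Set.image_singleton]
  rfl

theorem mul_mem_of_add_eq (V : ℕ → Submodule k R) [SetLike.GradedMonoid V] {p q : R} {m n N : ℕ}
    (hp : p ∈ V m) (hq : q ∈ V n) (hN : m + n = N) : p * q ∈ V N :=
  hN ▸ SetLike.mul_mem_graded hp hq

theorem pow_mem_of_mul_eq (V : ℕ → Submodule k R) [SetLike.GradedMonoid V] {p : R} {m n N : ℕ}
    (hp : p ∈ V m) (hN : n * m = N) : p ^ n ∈ V N :=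
  hN ▸ SetLike.pow_mem_graded n hp

theorem gradedMonoid_map {S : Type*} [CommRing S] [Algebra k S] (V : ℕ → Submodule k R)
    [SetLike.GradedMonoid V] (φ : R →ₐ[k] S) :
    SetLike.GradedMonoid fun n ↦ (V n).map φ.toLinearMap where
  one_mem := ⟨1, SetLike.one_mem_graded V, map_one φ⟩
  mul_mem := by
    rintro m n _ _ ⟨p, hp, rfl⟩ ⟨q, hq, rfl⟩
    exact ⟨p * q, SetLike.mul_mem_graded hp hq, map_mul φ p q⟩

theorem length_quotient_sup_of_mul_sub_pow_mem (𝒜 : ℕ → Submodule k R) [GradedAlgebra 𝒜]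
    {J : Ideal R} (hJ : J.IsHomogeneous 𝒜) {u f g : R} {d s : ℕ} (hu : u ∈ 𝒜 1)
    (hreg : Ideal.Quotient.mk J u ∈ nonZeroDivisors (R ⧸ J))
    (hlen : Module.length k (R ⧸ J ⊔ Ideal.span {u}) ≠ ⊤)
    (hs : ∀ n ≥ s, ∀ p ∈ 𝒜 (n + 1), p ∈ J ⊔ Ideal.span {u}) (hf : f ∈ 𝒜 d) (hg : g ∈ 𝒜 s)
    (hfg : f * g - u ^ (d + s) ∈ J) :
    Module.length k (R ⧸ J ⊔ Ideal.span {f}) =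
      d * Module.length k (R ⧸ J ⊔ Ideal.span {u}) := by
  let π : R →ₐ[k] R ⧸ J := Ideal.Quotient.mkₐ k J
  have := gradedMonoid_map 𝒜 π
  rw [length_quotient_sup_span_singleton] at hlen ⊢
  rw [length_quotient_sup_span_singleton]
  refine length_quotient_span_of_mul_eq_pow (fun n ↦ (𝒜 n).map π.toLinearMap) hreg hlen
    ⟨u, hu, rfl⟩ ?_ ⟨f, hf, rfl⟩ ⟨g, hg, rfl⟩ (Ideal.Quotient.eq.mpr hfg)
  rintro n hn _ ⟨p, hp, rfl⟩
  obtain ⟨q, hq, hpq⟩ :=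
    exists_sub_mul_mem_of_mem_sup_span_singleton 𝒜 hJ hu (add_comm n 1 ▸ hp) (hs n hn p hp)
  exact ⟨π q, ⟨q, hq, rfl⟩, Ideal.Quotient.eq.mpr hpq⟩

end QuotientGraded

theorem finite_and_finrank_eq_of_length_eq {k M : Type*} [DivisionRing k] [AddCommGroup M]
    [Module k M] {n : ℕ} (h : Module.length k M = n) :
    Module.Finite k M ∧ Module.finrank k M = n := by
  have hfin : IsFiniteLength k M := Module.length_ne_top_iff.mp (h ▸ ENat.natCast_ne_top n)
  have := (isFiniteLength_iff_isNoetherian_isArtinian.mp hfin).1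
  exact ⟨inferInstance, by rwa [Module.length_eq_finrank, Nat.cast_inj] at h⟩

noncomputable section

namespace E8CQ

attribute [local instance] weightedGradedAlgebra

/-- The weights of `u`, `v`, `w`, `x`: half their cohomological degrees. -/
def weight : Fin 4 → ℕ := ![1, 6, 10, 15]

/-- The exponents of `u`, `v`, `w`, `x` in the sequence `u, x, w ^ 2, v ^ 4` to which
`u, r15, r20, r24` reduces. -/
def exponent : Fin 4 → ℕ := ![1, 4, 2, 1]

/-- The polynomials of weight `n`. -/
abbrev weightPart (n : ℕ) : Submodule ℚ (MvPolynomial (Fin 4) ℚ) :=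
  weightedHomogeneousSubmodule ℚ weight n

theorem u_mem_weightPart : u ∈ weightPart 1 := isWeightedHomogeneous_X ℚ weight 0

theorem v_mem_weightPart : v ∈ weightPart 6 := isWeightedHomogeneous_X ℚ weight 1

theorem w_mem_weightPart : w ∈ weightPart 10 := isWeightedHomogeneous_X ℚ weight 2

theorem x_mem_weightPart : x ∈ weightPart 15 := isWeightedHomogeneous_X ℚ weight 3

theorem ofNat_mem_weightPart (m : ℕ) [m.AtLeastTwo] :
    (ofNat(m) : MvPolynomial (Fin 4) ℚ) ∈ weightPart 0 :=
  isWeightedHomogeneous_C weight (OfNat.ofNat m : ℚ)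

/-- The cofactor of `4 * r30` in an expression of `u ^ 58` as a combination of the relations, found
by solving the linear system for polynomials of weights `28`, `38`, `34`, `43`. -/
def cofactor30 : MvPolynomial (Fin 4) ℚ :=
  -10256107514905065 * u ^ 28 - 18380295376675920 * u ^ 18 * w - 8060754719476980 * u ^ 8 * w ^ 2
    - 46895773188351600 * u ^ 22 * v - 36533735897696100 * u ^ 12 * v * w
    + 4918828779301500 * u ^ 2 * v * w ^ 2 - 53539275267797400 * u ^ 16 * v ^ 2
    + 13238624992131000 * u ^ 6 * v ^ 2 * w + 952031376639000 * v ^ 3 * w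

/-- The cofactor of `r20` in the same expression of `u ^ 58`. -/
def cofactor20 : MvPolynomial (Fin 4) ℚ :=
  -187369125116597892 * u ^ 38 - 302523992670194760 * u ^ 28 * w
    - 51312547589911920 * u ^ 18 * w ^ 2 + 44228110229574480 * u ^ 8 * w ^ 3
    - 962902390689293908 * u ^ 32 * v - 614812941056062128 * u ^ 22 * v * w
    + 341568735753685248 * u ^ 12 * v * w ^ 2 + 13116876744804000 * u ^ 2 * v * w ^ 3
    - 1527260433726941280 * u ^ 26 * v ^ 2 + 181613304961644960 * u ^ 16 * v ^ 2 * w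
    + 83861789457163200 * u ^ 6 * v ^ 2 * w ^ 2 - 733553739232162800 * u ^ 20 * v ^ 3
    + 144697866080561760 * u ^ 10 * v ^ 3 * w + 2538750337704000 * v ^ 3 * w ^ 2
    - 85662840428475840 * u ^ 14 * v ^ 4 + 16231236828886800 * u ^ 4 * v ^ 4 * w

/-- The cofactor of `r24` in the same expression of `u ^ 58`. -/
def cofactor24 : MvPolynomial (Fin 4) ℚ :=
  144910650765021404 * u ^ 34 + 149047801890594000 * u ^ 24 * w
    - 17834100732781200 * u ^ 14 * w ^ 2 - 21907818716059920 * u ^ 4 * w ^ 3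
    + 703171323772398192 * u ^ 28 * v + 268657591184761536 * u ^ 18 * v * w
    - 137140971187205136 * u ^ 8 * v * w ^ 2 + 845895381904983360 * u ^ 22 * v ^ 2
    - 286757286697753440 * u ^ 12 * v ^ 2 * w + 3046500405244800 * v ^ 4 * w

/-- The cofactor of `r15` in the same expression of `u ^ 58`. -/
def cofactor15 : MvPolynomial (Fin 4) ℚ :=
  -cofactor30 * (18 * x + 9 * u ^ 15 + 24 * u ^ 9 * v + 12 * u ^ 5 * w)

theorem u_pow_eq_combination : u ^ 58 = r30 * (4 * cofactor30) + cofactor15 * r15 +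
    cofactor20 * r20 + cofactor24 * r24 := by
  simp only [cofactor15, cofactor20, cofactor24, cofactor30, r15, r20, r24, r30]
  ring

theorem relations_and_cofactor30_mem_weightPart :
    r15 ∈ weightPart 15 ∧ r20 ∈ weightPart 20 ∧ r24 ∈ weightPart 24 ∧ r30 ∈ weightPart 30 ∧
      cofactor30 ∈ weightPart 28 := by
  unfold r15 r20 r24 r30 cofactor30
  refine ⟨?_, ?_, ?_, ?_, ?_⟩ <;>
  · repeat' first
      | with_reducible exact u_mem_weightPart
      | with_reducible exact v_mem_weightPart
      | with_reducible exact w_mem_weightPart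
      | with_reducible exact x_mem_weightPart
      | with_reducible exact ofNat_mem_weightPart _
      | with_reducible refine add_mem ?_ ?_
      | with_reducible refine sub_mem ?_ ?_
      | with_reducible refine neg_mem ?_
      | with_reducible apply mul_mem_of_add_eq weightPart
      | with_reducible apply pow_mem_of_mul_eq weightPart
      | rfl

theorem u_dvd_r15_sub : u ∣ r15 - C (-2) * x :=
  ⟨u ^ 14, by simp only [r15, map_neg, map_ofNat]; ring⟩

theorem u_dvd_r20_sub : u ∣ r20 - C 3 * w ^ 2 :=
  ⟨9 * u ^ 19 + 45 * u ^ 13 * v + 12 * u ^ 9 * w + 60 * u ^ 7 * v ^ 2 + 30 * u ^ 3 * v * w +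
    10 * u * v ^ 3, by simp only [r20, map_ofNat]; ring⟩

theorem u_dvd_r24_sub : u ∣ r24 - C 5 * v ^ 4 :=
  ⟨11 * u ^ 23 + 60 * u ^ 17 * v + 21 * u ^ 13 * w + 105 * u ^ 11 * v ^ 2 + 60 * u ^ 7 * v * w +
    60 * u ^ 5 * v ^ 3 + 9 * u ^ 3 * w ^ 2 + 30 * u * v ^ 2 * w, by
    simp only [r24, map_ofNat]; ring⟩

theorem map_X_pow_exponent :
    [0, 3, 2, 1].map (fun i ↦ (X i : MvPolynomial (Fin 4) ℚ) ^ exponent i) =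
      [u, x, w ^ 2, v ^ 4] := by
  simp [exponent, u, v, w, x]

theorem isWeaklyRegular_u_x_w_sq_v_pow_four :
    IsWeaklyRegular (MvPolynomial (Fin 4) ℚ) [u, x, w ^ 2, v ^ 4] :=
  map_X_pow_exponent ▸ isWeaklyRegular_X_pow exponent (by decide)

theorem isWeaklyRegular_and_ofList_u_r15_r20_r24 :
    IsWeaklyRegular (MvPolynomial (Fin 4) ℚ) [u, r15, r20, r24] ∧
      Ideal.ofList [u, r15, r20, r24] = Ideal.ofList [u, x, w ^ 2, v ^ 4] := by
  have hC {c : ℚ} (hc : c ≠ 0) : IsUnit (C c : MvPolynomial (Fin 4) ℚ) := hc.isUnit.map C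
  have hmem {p : MvPolynomial (Fin 4) ℚ} (hp : u ∣ p) (rs : List _) : p ∈ Ideal.ofList (u :: rs) :=
    Ideal.mem_of_dvd _ hp (Ideal.subset_span List.mem_cons_self)
  have hv := isWeaklyRegular_u_x_w_sq_v_pow_four
  have hw := ((isWeaklyRegular_concat_iff (rs := [u, x, w ^ 2])).mp hv).1
  have hx := ((isWeaklyRegular_concat_iff (rs := [u, x])).mp hw).1
  have hu := ((isWeaklyRegular_concat_iff (rs := [u])).mp hx).1
  obtain ⟨h15, e15⟩ := isWeaklyRegular_concat_congr (bs := [u]) hu hx rfl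
    (hC (by norm_num)) (hmem u_dvd_r15_sub [])
  obtain ⟨h20, e20⟩ := isWeaklyRegular_concat_congr (bs := [u, x]) h15 hw e15
    (hC (by norm_num)) (hmem u_dvd_r20_sub _)
  exact isWeaklyRegular_concat_congr (bs := [u, x, w ^ 2]) h20 hv e20
    (hC (by norm_num)) (hmem u_dvd_r24_sub _)

theorem isWeaklyRegular_r15_r20_r24_u :
    IsWeaklyRegular (MvPolynomial (Fin 4) ℚ) ([r15, r20, r24] ++ [u]) := by
  obtain ⟨h15, h20, h24, -⟩ := relations_and_cofactor30_mem_weightPart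
  refine isWeaklyRegular_of_perm_of_homogeneous weightPart
    isWeaklyRegular_and_ofList_u_r15_r20_r24.1 (List.perm_append_comm (l₁ := [u])) ?_
  simp only [List.forall_mem_cons]
  exact ⟨⟨1, by norm_num, u_mem_weightPart⟩, ⟨15, by norm_num, h15⟩, ⟨20, by norm_num, h20⟩,
    ⟨24, by norm_num, h24⟩, by simp⟩

theorem ofList_sup_span_u :
    Ideal.ofList [r15, r20, r24] ⊔ Ideal.span {u} =
      Ideal.span (Set.range fun i ↦ (X i : MvPolynomial (Fin 4) ℚ) ^ exponent i) := by
  rw [sup_comm, ← Ideal.ofList_cons, isWeaklyRegular_and_ofList_u_r15_r20_r24.2,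
    ← map_X_pow_exponent, ofList_map_eq_span_image, ← Set.image_univ]
  exact congrArg (fun s ↦ Ideal.span (_ '' s)) (Set.eq_univ_of_forall (by decide))

theorem r30_mul_cofactor30_sub_u_pow_mem :
    r30 * (4 * cofactor30) - u ^ (30 + 28) ∈ Ideal.ofList [r15, r20, r24] := by
  have hgen (c r : MvPolynomial (Fin 4) ℚ) (hr : r ∈ [r15, r20, r24]) :
      c * r ∈ Ideal.ofList [r15, r20, r24] :=
    Ideal.mul_mem_left _ c (Ideal.subset_span hr)
  have hsum := add_mem (add_mem (hgen cofactor15 r15 (by simp)) (hgen cofactor20 r20 (by simp)))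
    (hgen cofactor24 r24 (by simp))
  rw [u_pow_eq_combination]
  convert neg_mem hsum using 1
  ring

theorem relIdeal_eq_ofList : relIdeal = Ideal.ofList [r15, r20, r24, r30] :=
  congrArg Ideal.span (by ext; simp)

theorem isWeaklyRegular_relations :
    IsWeaklyRegular (MvPolynomial (Fin 4) ℚ) [r15, r20, r24, r30] := by
  obtain ⟨h, hu⟩ := isWeaklyRegular_concat_iff.mp isWeaklyRegular_r15_r20_r24_u
  refine (isWeaklyRegular_concat_iff (rs := [r15, r20, r24])).mpr ⟨h, ?_⟩
  rw [← mk_mem_nonZeroDivisors_iff] at hu ⊢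
  have hpow := Ideal.Quotient.eq.mpr r30_mul_cofactor30_sub_u_pow_mem
  rw [map_mul, map_pow] at hpow
  exact mem_nonZeroDivisors_of_mul_eq_pow hu hpow

theorem length_quotient_relIdeal :
    Module.length ℚ (MvPolynomial (Fin 4) ℚ ⧸ relIdeal) = (240 : ℕ) := by
  obtain ⟨h15, h20, h24, h30, hcof⟩ := relations_and_cofactor30_mem_weightPart
  have hJ : (Ideal.ofList [r15, r20, r24]).IsHomogeneous weightPart :=
    isHomogeneous_ofList _ (by
      simp only [List.forall_mem_cons]
      exact ⟨⟨15, h15⟩, ⟨20, h20⟩, ⟨24, h24⟩, by simp⟩)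
  have hu := mk_mem_nonZeroDivisors_iff.mpr
    (isWeaklyRegular_concat_iff.mp isWeaklyRegular_r15_r20_r24_u).2
  have hlen : Module.length ℚ (MvPolynomial (Fin 4) ℚ ⧸
      Ideal.ofList [r15, r20, r24] ⊔ Ideal.span {u}) = (8 : ℕ) := by
    rw [ofList_sup_span_u, length_quotient_span_X_pow, Fin.prod_univ_four]
    rfl
  have hlarge (n : ℕ) (hn : 28 ≤ n) (p) (hp : p ∈ weightPart (n + 1)) :
      p ∈ Ideal.ofList [r15, r20, r24] ⊔ Ideal.span {u} := by
    rw [ofList_sup_span_u]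
    refine mem_span_X_pow_of_isWeightedHomogeneous exponent ?_ hp
    rw [Fin.sum_univ_four]
    exact Nat.lt_succ_of_le hn
  have hsplit : relIdeal = Ideal.ofList [r15, r20, r24] ⊔ Ideal.span {r30} := by
    rw [relIdeal_eq_ofList, ← Ideal.ofList_singleton, ← Ideal.ofList_append]
    rfl
  rw [hsplit, length_quotient_sup_of_mul_sub_pow_mem weightPart hJ u_mem_weightPart hu
    (hlen ▸ ENat.natCast_ne_top 8) hlarge h30
    (mul_mem_of_add_eq weightPart (ofNat_mem_weightPart 4) hcof (zero_add 28))
    r30_mul_cofactor30_sub_u_pow_mem, hlen]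
  norm_num

end E8CQ

end

/-- `ℚ[u,v,w,x]/(r₁₅, r₂₀, r₂₄, r₃₀)` is a `240`-dimensional
`ℚ`-vector space; in particular `r₁₅, r₂₀, r₂₄, r₃₀` is a regular sequence in
`ℚ[u,v,w,x]`. -/
theorem finrank_E8C_rat :
    Module.Finite ℚ (MvPolynomial (Fin 4) ℚ ⧸ E8CQ.relIdeal) ∧
    Module.finrank ℚ (MvPolynomial (Fin 4) ℚ ⧸ E8CQ.relIdeal) = 240 ∧
    RingTheory.Sequence.IsRegular (MvPolynomial (Fin 4) ℚ)
      [E8CQ.r15, E8CQ.r20, E8CQ.r24, E8CQ.r30] := by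
  obtain ⟨hfinite, hfinrank⟩ := finite_and_finrank_eq_of_length_eq E8CQ.length_quotient_relIdeal
  have hnontrivial := Module.nontrivial_of_finrank_pos (R := ℚ)
    (M := MvPolynomial (Fin 4) ℚ ⧸ E8CQ.relIdeal) (by omega)
  refine ⟨hfinite, hfinrank, E8CQ.isWeaklyRegular_relations, ?_⟩
  rw [smul_eq_mul, Ideal.mul_top, ← E8CQ.relIdeal_eq_ofList]
  exact (Ideal.Quotient.nontrivial_iff.mp hnontrivial).symm
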